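/- e^u · ( ρ(u,w,H) + ∂ρ/∂u(u,w,H) ) = e^{−4u}·τ + Σ_{i,j} H_{ij} τ_{ij}, where ∂ρ/∂u is the partial derivative of ρ with respect to its first (scalar) argument with w and H held fixed. (This is part (iii) of the lemma expressing the stress–energy components in terms of derivatives of the reduced energy density ρ: e^U(ρ + ∂ρ/∂U) = e^{−4U}τ + τ_ℓ{}^ℓ.) -/

import Mathlib

/-!
By the chain rule `∂ρ/∂u = e^{-3u} (-3 Λ + DΛ(Ĝ)[∂Ĝ/∂u])`, so the left-hand side equals
`e^{-2u} (-2 Λ + DΛ(Ĝ)[∂Ĝ/∂u])`. With `P_{μν} = ∂Λ/∂M_{μν}(Ĝ)`, expanding `∂Ĝ/∂u` in the standard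
basis (`hasDerivAt_Ghat`, `map_eq_sum_basisMat`) gives
`e^{-2u} DΛ(Ĝ)[∂Ĝ/∂u] = 2 e^{-4u} P_{00} + 2 wᵀHw P_{00} - 2 (Hw)_i (P_{0i} + P_{i0}) + 2 H_{ij} P_{ij}`.
On the right-hand side the `Λ`-terms are `e^{-2u} Λ` from `τ` and `-3 e^{-2u} Λ` from the trace
(as `H_{ij} h_{ij} = 3`, `sum_mul_inv`), the shift contributions to `g` cancelling, and the `P`-terms
agree because `P` is symmetric at the symmetric matrix `Ĝ` (`fderiv_basisMat_symm`).
-/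

noncomputable section

/-- The standard basis matrix `e_{μν}` of the space of 4×4 matrices. -/
def basisMat (μ ν : Fin 4) : Fin 4 → Fin 4 → ℝ := Pi.single μ (Pi.single ν 1)

/-- The inverse spacetime metric `Ĝ(u,w,H)`:
`Ĝ^{00} = −e^{−2u} + e^{2u}·wᵀHw`, `Ĝ^{0i} = Ĝ^{i0} = −e^{2u}(Hw)_i`, `Ĝ^{ij} = e^{2u}H_{ij}`. -/
def Ghat (u : ℝ) (w : Fin 3 → ℝ) (H : Fin 3 → Fin 3 → ℝ) : Fin 4 → Fin 4 → ℝ :=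
  Fin.cons
    (Fin.cons (-Real.exp (-(2*u)) + Real.exp (2*u) * ∑ i, ∑ j, w i * H i j * w j)
      (fun j : Fin 3 => -Real.exp (2*u) * ∑ k, H j k * w k))
    (fun i : Fin 3 => Fin.cons (-Real.exp (2*u) * ∑ k, H i k * w k)
      (fun j : Fin 3 => Real.exp (2*u) * H i j))

/-- The spacetime metric `g(u,w,H)`, with `h := H⁻¹`:
`g_{00} = −e^{2u}`, `g_{0i} = g_{i0} = −e^{2u}w_i`, `g_{ij} = e^{−2u}h_{ij} − e^{2u}w_i w_j`. -/
def gLow (u : ℝ) (w : Fin 3 → ℝ) (H : Fin 3 → Fin 3 → ℝ) : Fin 4 → Fin 4 → ℝ :=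
  Fin.cons
    (Fin.cons (-Real.exp (2*u)) (fun j : Fin 3 => -Real.exp (2*u) * w j))
    (fun i : Fin 3 => Fin.cons (-Real.exp (2*u) * w i)
      (fun j : Fin 3 => Real.exp (-(2*u)) * (Matrix.of H)⁻¹ i j - Real.exp (2*u) * w i * w j))

/-- The stress–energy matrix `T_{μν} = 2 ∂Λ/∂M_{μν}(Ĝ) − Λ(Ĝ) g_{μν}`. -/
def Tmat (Λ : (Fin 4 → Fin 4 → ℝ) → ℝ) (u : ℝ) (w : Fin 3 → ℝ)
    (H : Fin 3 → Fin 3 → ℝ) : Fin 4 → Fin 4 → ℝ :=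
  fun μ ν => 2 * fderiv ℝ Λ (Ghat u w H) (basisMat μ ν) - Λ (Ghat u w H) * gLow u w H μ ν

/-- `τ := T_{00}`. -/
def tau (Λ : (Fin 4 → Fin 4 → ℝ) → ℝ) (u : ℝ) (w : Fin 3 → ℝ) (H : Fin 3 → Fin 3 → ℝ) : ℝ :=
  Tmat Λ u w H 0 0

/-- `τ_i := T_{0i} − τ·w_i`. -/
def tauVec (Λ : (Fin 4 → Fin 4 → ℝ) → ℝ) (u : ℝ) (w : Fin 3 → ℝ) (H : Fin 3 → Fin 3 → ℝ)
    (i : Fin 3) : ℝ :=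
  Tmat Λ u w H 0 i.succ - tau Λ u w H * w i

/-- `τ_{ij} := T_{ij} − τ_i w_j − τ_j w_i − τ w_i w_j`. -/
def tauMat (Λ : (Fin 4 → Fin 4 → ℝ) → ℝ) (u : ℝ) (w : Fin 3 → ℝ) (H : Fin 3 → Fin 3 → ℝ)
    (i j : Fin 3) : ℝ :=
  Tmat Λ u w H i.succ j.succ - tauVec Λ u w H i * w j - tauVec Λ u w H j * w i
    - tau Λ u w H * w i * w j

/-- The reduced energy density `ρ(u,w,H) := e^{−3u} Λ(Ĝ(u,w,H))`. -/
def rho (Λ : (Fin 4 → Fin 4 → ℝ) → ℝ) (u : ℝ) (w : Fin 3 → ℝ) (H : Fin 3 → Fin 3 → ℝ) : ℝ :=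
  Real.exp (-(3*u)) * Λ (Ghat u w H)

/-- The derivative of `u ↦ Ĝ(u,w,H)`. -/
def dGhat (u : ℝ) (w : Fin 3 → ℝ) (H : Fin 3 → Fin 3 → ℝ) : Fin 4 → Fin 4 → ℝ :=
  Fin.cons
    (Fin.cons (2 * Real.exp (-(2*u)) + 2 * Real.exp (2*u) * ∑ i, ∑ j, w i * H i j * w j)
      (fun j : Fin 3 => -(2 * Real.exp (2*u)) * ∑ k, H j k * w k))
    (fun i : Fin 3 => Fin.cons (-(2 * Real.exp (2*u)) * ∑ k, H i k * w k)
      (fun j : Fin 3 => 2 * Real.exp (2*u) * H i j))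

lemma hasDerivAt_Ghat (u : ℝ) (w : Fin 3 → ℝ) (H : Fin 3 → Fin 3 → ℝ) :
    HasDerivAt (fun u' : ℝ => Ghat u' w H) (dGhat u w H) u := by
  have hE : HasDerivAt (fun u' : ℝ => Real.exp (2*u')) (2 * Real.exp (2*u)) u := by
    have h := ((hasDerivAt_id u).const_mul 2).exp
    simpa [mul_comm] using h
  have hF : HasDerivAt (fun u' : ℝ => -Real.exp (-(2*u'))) (2 * Real.exp (-(2*u))) u := by
    have h := ((hasDerivAt_id u).const_mul 2).neg.exp.neg
    exact (h.congr_deriv (by simp [mul_comm]))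
  rw [hasDerivAt_pi]
  intro μ
  rw [hasDerivAt_pi]
  intro ν
  refine Fin.cases ?_ (fun i => ?_) μ <;> refine Fin.cases ?_ (fun j => ?_) ν <;>
    simp only [Ghat, dGhat, Fin.cons_zero, Fin.cons_succ]
  · exact hF.add (hE.mul_const _)
  · exact hE.neg.mul_const _
  · exact hE.neg.mul_const _
  · exact hE.mul_const _

lemma Ghat_symm (u : ℝ) (w : Fin 3 → ℝ) (H : Fin 3 → Fin 3 → ℝ)
    (hH : ∀ i j, H i j = H j i) (μ ν : Fin 4) : Ghat u w H μ ν = Ghat u w H ν μ := by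
  refine Fin.cases ?_ (fun i => ?_) μ <;> refine Fin.cases ?_ (fun j => ?_) ν <;>
    simp only [Ghat, Fin.cons_zero, Fin.cons_succ]
  rw [hH]

/-- At a symmetric matrix `G`, the gradient of a transpose-invariant function is symmetric:
differentiate `t ↦ Λ (G + t e_{μν})`, which equals `t ↦ Λ (G + t e_{νμ})`. -/
lemma fderiv_basisMat_symm {Λ : (Fin 4 → Fin 4 → ℝ) → ℝ} (hΛ : Differentiable ℝ Λ)
    (hΛsymm : ∀ M : Fin 4 → Fin 4 → ℝ, Λ (fun μ ν => M ν μ) = Λ M)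
    {G : Fin 4 → Fin 4 → ℝ} (hG : ∀ μ ν, G μ ν = G ν μ) (μ ν : Fin 4) :
    fderiv ℝ Λ G (basisMat μ ν) = fderiv ℝ Λ G (basisMat ν μ) := by
  rw [← (hΛ G).lineDeriv_eq_fderiv, ← (hΛ G).lineDeriv_eq_fderiv]
  unfold lineDeriv
  congr 1
  funext t
  rw [← hΛsymm]
  congr 1
  funext a b
  have hb : basisMat μ ν b a = basisMat ν μ a b := by
    simp only [basisMat, Pi.single_apply]
    split_ifs <;> simp_all
  simp only [Pi.add_apply, Pi.smul_apply, hb, hG b a]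

lemma map_eq_sum_basisMat (L : (Fin 4 → Fin 4 → ℝ) →L[ℝ] ℝ) (M : Fin 4 → Fin 4 → ℝ) :
    L M = ∑ μ, ∑ ν, M μ ν * L (basisMat μ ν) := by
  have hM : M = ∑ μ, ∑ ν, M μ ν • basisMat μ ν := by
    funext a b
    simp [Finset.sum_apply, basisMat, Pi.single_apply, ite_apply]
  conv_lhs => rw [hM]
  simp only [map_sum, map_smul, smul_eq_mul]

/-- The trace `H^{ij} h_{ij} = 3`; symmetry of `H` turns the double sum into `tr (H H⁻¹)`. -/
lemma sum_mul_inv (H : Fin 3 → Fin 3 → ℝ)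
    (hHsymm : ∀ i j, H i j = H j i) (hHinv : IsUnit (Matrix.of H).det) :
    ∑ i, ∑ j, H i j * (Matrix.of H)⁻¹ i j = 3 := by
  have h : Matrix.trace (Matrix.of H * (Matrix.of H)⁻¹) = 3 := by
    rw [Matrix.mul_nonsing_inv _ hHinv]
    simp
  rw [← h, Matrix.trace, Finset.sum_comm]
  refine Finset.sum_congr rfl fun i _ => ?_
  rw [Matrix.diag_apply, Matrix.mul_apply]
  exact Finset.sum_congr rfl fun j _ => by rw [Matrix.of_apply, hHsymm j i]

/-- Part (iii) of the lemma: `e^U (ρ + ∂ρ/∂U) = e^{−4U} τ + τ_ℓ{}^ℓ`,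
where the trace of `τ_{ij}` is taken with `H = h^{ij}`. -/
theorem stmt_2 (Λ : (Fin 4 → Fin 4 → ℝ) → ℝ) (hΛ : ContDiff ℝ 1 Λ)
    (hΛsymm : ∀ M : Fin 4 → Fin 4 → ℝ, Λ (fun μ ν => M ν μ) = Λ M)
    (u : ℝ) (w : Fin 3 → ℝ) (H : Fin 3 → Fin 3 → ℝ)
    (hHsymm : ∀ i j, H i j = H j i) (hHinv : IsUnit (Matrix.of H).det) :
    Real.exp u * (rho Λ u w H + deriv (fun u' : ℝ => rho Λ u' w H) u)
      = Real.exp (-(4*u)) * tau Λ u w H + ∑ i, ∑ j, H i j * tauMat Λ u w H i j := by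
  have hd : Differentiable ℝ Λ := hΛ.differentiable (by norm_num)
  have hP := fderiv_basisMat_symm hd hΛsymm (Ghat_symm u w H hHsymm)
  have hρ : HasDerivAt (fun u' : ℝ => rho Λ u' w H)
      (-3 * Real.exp (-(3*u)) * Λ (Ghat u w H)
        + Real.exp (-(3*u)) * fderiv ℝ Λ (Ghat u w H) (dGhat u w H)) u := by
    have h3 : HasDerivAt (fun u' : ℝ => Real.exp (-(3*u'))) (-3 * Real.exp (-(3*u))) u := by
      have h := ((hasDerivAt_id u).const_mul 3).neg.exp
      simpa [mul_comm] using h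
    exact h3.mul ((hd _).hasFDerivAt.comp_hasDerivAt u (hasDerivAt_Ghat u w H))
  have htr := sum_mul_inv H hHsymm hHinv
  have e4 : Real.exp (-(4*u)) = Real.exp (-(2*u)) * Real.exp (-(2*u)) := by
    rw [← Real.exp_add]; ring_nf
  have e3 : Real.exp u * Real.exp (-(3*u)) = Real.exp (-(2*u)) := by
    rw [← Real.exp_add]; ring_nf
  have e0 : Real.exp (-(2*u)) * Real.exp (2*u) = 1 := by
    rw [← Real.exp_add]; simp
  rw [hρ.deriv, map_eq_sum_basisMat, e4]
  simp only [tauMat, tauVec, tau, Tmat, rho]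
  generalize fderiv ℝ Λ (Ghat u w H) = L at *
  generalize Λ (Ghat u w H) = l at *
  simp only [Fin.sum_univ_succ (n := 3), gLow, dGhat, Fin.cons_zero, Fin.cons_succ]
  simp only [fun i : Fin 3 => hP i.succ 0]
  generalize Real.exp (-(2*u)) = F at *
  generalize Real.exp (2*u) = E at *
  generalize Real.exp (-(3*u)) = A at *
  generalize Real.exp u = B at *
  generalize (Matrix.of H)⁻¹ = h at *
  generalize L (basisMat 0 0) = p at *
  have hq : ∃ q : Fin 3 → ℝ, ∀ i : Fin 3, L (basisMat 0 i.succ) = q i := ⟨_, fun _ => rfl⟩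
  have hr : ∃ r : Fin 3 → Fin 3 → ℝ, ∀ i j : Fin 3, L (basisMat i.succ j.succ) = r i j :=
    ⟨_, fun _ _ => rfl⟩
  obtain ⟨q, hq⟩ := hq
  obtain ⟨r, hr⟩ := hr
  simp only [hq, hr]
  -- `D` collects the directions of `DΛ` scaled by `e^{2u}`; the factor `e^{-2u} e^{2u}` cancels.
  obtain ⟨D, hD⟩ : ∃ D, D = 2 * p * (∑ i, ∑ j, w i * H i j * w j)
      - 4 * (∑ i, (∑ k, H i k * w k) * q i) + 2 * ∑ i, ∑ j, H i j * r i j := ⟨_, rfl⟩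
  have hS : (2 * F + 2 * E * ∑ i, ∑ j, w i * H i j * w j) * p
      + ∑ i, -(2 * E) * (∑ k, H i k * w k) * q i
      + ∑ i, (-(2 * E) * (∑ k, H i k * w k) * q i + ∑ j, 2 * E * H i j * r i j)
      = 2 * F * p + E * D := by
    rw [hD]
    simp only [Fin.sum_univ_three]
    ring
  rw [hS]
  have hR : ∑ i, ∑ j, H i j * (2 * r i j - l * (F * h i j - E * w i * w j)
        - (2 * q i - l * (-E * w i) - (2 * p - l * -E) * w i) * w j
        - (2 * q j - l * (-E * w j) - (2 * p - l * -E) * w j) * w i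
        - (2 * p - l * -E) * w i * w j)
      = D - 3 * l * F := by
    rw [hD]
    simp only [Fin.sum_univ_three] at htr ⊢
    simp only [hHsymm 1 0, hHsymm 2 0, hHsymm 2 1] at htr ⊢
    linear_combination (-l * F) * htr
  rw [hR]
  linear_combination (-2 * l + 2 * F * p + E * D) * e3 + (D - l * F) * e0
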